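/- For a centrally normalized skew ruled surface (support function q = gv/w), the relative magnitudes are H = g'/δ, K = (g'/δ)², S = -g[κv² + δ²(κ - λ)]/(2δ²v), and J = 3[κgv² + 2δg'v + δ²g(κ - λ)]/(2δ²v); in particular H² - K = 0 at every point (all points are relative umbilics). -/

import Mathlib

noncomputable section

open Real

/-- Points/vectors of Euclidean 3-space. -/
abbrev E3 := Fin 3 → ℝ

/-- Euclidean scalar product in `E3`. -/
def dot3 (a b : E3) : ℝ := a 0 * b 0 + a 1 * b 1 + a 2 * b 2

/-- Cross product in `E3`. -/
def cross3 (a b : E3) : E3 :=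
  ![a 1 * b 2 - a 2 * b 1, a 2 * b 0 - a 0 * b 2, a 0 * b 1 - a 1 * b 0]

/-- Triple (scalar) product `(a, b, c)`. -/
def det3 (a b c : E3) : ℝ := dot3 a (cross3 b c)

/-- Partial derivative with respect to the first variable `u`. -/
def pderivU {F : Type*} [NormedAddCommGroup F] [NormedSpace ℝ F]
    (f : ℝ → ℝ → F) (u v : ℝ) : F := deriv (fun t => f t v) u

/-- Partial derivative with respect to the second variable `v`. -/
def pderivV {F : Type*} [NormedAddCommGroup F] [NormedSpace ℝ F]
    (f : ℝ → ℝ → F) (u v : ℝ) : F := deriv (fun t => f u t) v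

theorem aux_det3_diff {a b c : ℝ → E3} (ha : Differentiable ℝ a) (hb : Differentiable ℝ b)
    (hc : Differentiable ℝ c) : Differentiable ℝ (fun t => det3 (a t) (b t) (c t)) := by
  have ha' := fun i => differentiable_pi.1 ha i
  have hb' := fun i => differentiable_pi.1 hb i
  have hc' := fun i => differentiable_pi.1 hc i
  simp only [det3, dot3, cross3, Matrix.cons_val_zero, Matrix.cons_val_one, Matrix.cons_val]
  fun_prop

theorem aux_cross_hasDeriv {a b : ℝ → E3} {a' b' : E3} {u : ℝ} (ha : HasDerivAt a a' u)
    (hb : HasDerivAt b b' u) :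
    HasDerivAt (fun t => cross3 (a t) (b t)) (cross3 a' (b u) + cross3 (a u) b') u := by
  have ha' := fun i => hasDerivAt_pi.1 ha i
  have hb' := fun i => hasDerivAt_pi.1 hb i
  rw [hasDerivAt_pi]
  intro i
  fin_cases i
  · refine (((ha' 1).mul (hb' 2)).sub ((ha' 2).mul (hb' 1))).congr_deriv ?_
    change _ = cross3 a' (b u) 0 + cross3 (a u) b' 0
    simp [cross3]; ring
  · refine (((ha' 2).mul (hb' 0)).sub ((ha' 0).mul (hb' 2))).congr_deriv ?_
    change _ = cross3 a' (b u) 1 + cross3 (a u) b' 1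
    simp [cross3]; ring
  · refine (((ha' 0).mul (hb' 1)).sub ((ha' 1).mul (hb' 0))).congr_deriv ?_
    change _ = cross3 a' (b u) 2 + cross3 (a u) b' 2
    simp [cross3]; ring

theorem aux_unit {a : ℝ → E3} {a' : E3} {u : ℝ} {I : Set ℝ} (hI : IsOpen I) (hu : u ∈ I)
    (h1 : ∀ u ∈ I, dot3 (a u) (a u) = 1) (ha : HasDerivAt a a' u) : dot3 (a u) a' = 0 := by
  have ha' := fun i => hasDerivAt_pi.1 ha i
  have h := (((ha' 0).mul (ha' 0)).add ((ha' 1).mul (ha' 1))).add ((ha' 2).mul (ha' 2))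
  have h2 : HasDerivAt (fun _ : ℝ => (1:ℝ)) 0 u := hasDerivAt_const u 1
  have h3 := h2.congr_of_eventuallyEq
    (f₁ := fun t => dot3 (a t) (a t)) (Filter.eventually_of_mem (hI.mem_nhds hu) h1)
  have h4 := h.unique h3
  simp only [dot3]
  linarith

/-- for a centrally normalized skew ruled surface (`q = gv/w`):
`H = g´/δ`, `K = (g´/δ)²`, `S = -g[κv² + δ²(κ-λ)]/(2δ²v)`,
`J = 3[κgv² + 2δg´v + δ²g(κ-λ)]/(2δ²v)`, and `H² - K = 0` everywhere. -/
theorem stmt_15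
    (I : Set ℝ) (hI : IsOpen I) (hIc : IsPreconnected I)
    (s e : ℝ → E3) (hs : ContDiff ℝ (⊤ : ℕ∞) s) (he : ContDiff ℝ (⊤ : ℕ∞) e)
    (heu : ∀ u ∈ I, dot3 (e u) (e u) = 1)
    (he'u : ∀ u ∈ I, dot3 (deriv e u) (deriv e u) = 1)
    (hse : ∀ u ∈ I, dot3 (deriv s u) (deriv e u) = 0)
    (n z : ℝ → E3) (hn : ∀ u, n u = deriv e u) (hz : ∀ u, z u = cross3 (e u) (n u))
    (κ δ lam : ℝ → ℝ)
    (hκ : ∀ u, κ u = det3 (e u) (deriv e u) (deriv (deriv e) u))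
    (hδ : ∀ u, δ u = det3 (deriv s u) (e u) (deriv e u))
    (hδ0 : ∀ u ∈ I, δ u ≠ 0)
    (hstr : ∀ u ∈ I, deriv s u = (δ u * lam u) • e u + δ u • z u)
    (x : ℝ → ℝ → E3) (hx : ∀ u v, x u v = s u + v • e u)
    (w : ℝ → ℝ → ℝ) (hw : ∀ u v, w u v = Real.sqrt ((δ u)^2 + v^2))
    (ξ : ℝ → ℝ → E3) (hξ : ∀ u v, ξ u v = (w u v)⁻¹ • (δ u • n u - v • z u))
    (g : ℝ → ℝ) (hg : ContDiff ℝ (⊤ : ℕ∞) g) (hg0 : ∀ u ∈ I, g u ≠ 0)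
    (q : ℝ → ℝ → ℝ) (hqdef : ∀ u v, q u v = g u * v / w u v)
    (y1 y2 y3 : ℝ → ℝ → ℝ)
    (hy1 : ∀ u v, y1 u v = -(w u v) * (δ u * pderivU q u v
      + pderivV q u v * (κ u * (w u v)^2 + deriv δ u * v)) / (δ u)^2)
    (hy2 : ∀ u v, y2 u v = ((δ u)^2 * q u v - (w u v)^2 * v * pderivV q u v) / (δ u * w u v))
    (hy3 : ∀ u v, y3 u v = -(v * q u v + (w u v)^2 * pderivV q u v) / (w u v))
    (y : ℝ → ℝ → E3) (hy : ∀ u v, y u v = y1 u v • e u + y2 u v • n u + y3 u v • z u)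
    -- relative shape operator, relative curvature and relative mean curvature
    (B : Fin 2 → Fin 2 → ℝ → ℝ → ℝ)
    (hB : ∀ u ∈ I, ∀ v : ℝ,
      pderivU y u v = -(B 0 0 u v • pderivU x u v + B 0 1 u v • pderivV x u v) ∧
      pderivV y u v = -(B 1 0 u v • pderivU x u v + B 1 1 u v • pderivV x u v))
    (K H : ℝ → ℝ → ℝ)
    (hK : ∀ u v, K u v = B 0 0 u v * B 1 1 u v - B 0 1 u v * B 1 0 u v)
    (hH : ∀ u v, H u v = (B 0 0 u v + B 1 1 u v) / 2)
    -- the Pick invariant, formula (210), and the scalar curvature, formula (225)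
    (J S : ℝ → ℝ → ℝ)
    (hJ : ∀ u v, v ≠ 0 → J u v = 3 * ((w u v)^2 * pderivV q u v + v * q u v)
        / (2 * (δ u)^2 * (w u v)^3 * q u v)
      * ((w u v)^2 * (κ u * q u v * v + 2 * δ u * pderivU q u v
          + pderivV q u v * (κ u * (w u v)^2 + deriv δ u * v - (δ u)^2 * lam u))
        - (δ u)^2 * q u v * (lam u * v - deriv δ u)))
    (hS : ∀ u v, v ≠ 0 → S u v = (1 / (2 * (δ u)^2 * (w u v)^3 * q u v))
      * ((q u v)^2 * (-(κ u) * (w u v)^4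
          + (δ u)^2 * (lam u * v^2 - 2 * deriv δ u * v - (δ u)^2 * lam u))
        + (w u v)^4 * q u v * pderivV q u v * (2 * κ u * v + deriv δ u)
        + (w u v)^4 * (κ u * (w u v)^2 + deriv δ u * v - (δ u)^2 * lam u)
          * (q u v * pderivV (pderivV q) u v - (pderivV q u v)^2)
        - 2 * δ u * (w u v)^4 * pderivU q u v * pderivV q u v
        + 2 * δ u * (w u v)^4 * q u v * pderivV (pderivU q) u v)) :
    ∀ u ∈ I, ∀ v : ℝ,
      H u v = deriv g u / δ u ∧
      K u v = (deriv g u / δ u)^2 ∧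
      (v ≠ 0 →
        S u v = -(g u) * (κ u * v^2 + (δ u)^2 * (κ u - lam u)) / (2 * (δ u)^2 * v) ∧
        J u v = 3 * (κ u * g u * v^2 + 2 * δ u * deriv g u * v
          + (δ u)^2 * g u * (κ u - lam u)) / (2 * (δ u)^2 * v)) ∧
      (H u v)^2 - K u v = 0 := by
  intro u hu v
  have hs1 : Differentiable ℝ (deriv s) :=
    ((contDiff_infty_iff_deriv.1 hs).2).differentiable (by simp)
  have he0 : Differentiable ℝ e := he.differentiable (by simp)
  have heC1 := (contDiff_infty_iff_deriv.1 he).2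
  have heC2 := (contDiff_infty_iff_deriv.1 heC1).2
  have he1 : Differentiable ℝ (deriv e) := heC1.differentiable (by simp)
  have he2 : Differentiable ℝ (deriv (deriv e)) := heC2.differentiable (by simp)
  have hg1 : Differentiable ℝ g := hg.differentiable (by simp)
  have hg2 : Differentiable ℝ (deriv g) :=
    ((contDiff_infty_iff_deriv.1 hg).2).differentiable (by simp)
  have hδd : Differentiable ℝ δ := by
    rw [show δ = _ from funext hδ]; exact aux_det3_diff hs1 he0 he1
  have hκd : Differentiable ℝ κ := by
    rw [show κ = _ from funext hκ]; exact aux_det3_diff he0 he1 he2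
  have hpos : ∀ t ∈ I, ∀ r : ℝ, 0 < (δ t)^2 + r^2 := fun t ht r => by
    have := hδ0 t ht
    positivity
  have hwpos : ∀ t ∈ I, ∀ r : ℝ, 0 < w t r := fun t ht r => by
    rw [hw]; exact Real.sqrt_pos.2 (hpos t ht r)
  have hw2 : ∀ t ∈ I, ∀ r : ℝ, (w t r)^2 = (δ t)^2 + r^2 := fun t ht r => by
    rw [hw]; exact Real.sq_sqrt (hpos t ht r).le
  have hwv : ∀ t ∈ I, ∀ r : ℝ, HasDerivAt (fun r => w t r) (r / w t r) r := fun t ht r => by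
    have h := (((hasDerivAt_id r).pow 2).const_add ((δ t)^2)).sqrt (hpos t ht r).ne'
    have h0 := (hwpos t ht r).ne'
    simp only [hw] at h0 ⊢
    refine h.congr_deriv ?_
    change (2:ℝ) * r ^ (2 - 1) * 1 / (2 * √(δ t ^ 2 + r ^ 2)) = _
    norm_num
    field_simp
  have hwu : ∀ t ∈ I, ∀ r : ℝ,
      HasDerivAt (fun t => w t r) (δ t * deriv δ t / w t r) t := fun t ht r => by
    have h := ((((hδd t).hasDerivAt).pow 2).add_const (r^2)).sqrt (hpos t ht r).ne'
    have h0 := (hwpos t ht r).ne'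
    simp only [hw] at h0 ⊢
    refine h.congr_deriv ?_
    change (2:ℝ) * δ t ^ (2 - 1) * deriv δ t / (2 * √(δ t ^ 2 + r ^ 2)) = _
    norm_num
    field_simp
  have hqv : ∀ t ∈ I, ∀ r : ℝ, pderivV q t r = g t * (δ t)^2 / (w t r)^3 := fun t ht r => by
    have h := ((hasDerivAt_id r).const_mul (g t)).div (hwv t ht r) (hwpos t ht r).ne'
    have h0 := (hwpos t ht r).ne'
    have hs := hw2 t ht r
    simp only [pderivV, hqdef]
    refine (h.deriv).trans ?_
    simp only [id]
    field_simp
    linear_combination (g t) * hs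
  have hqu : ∀ t ∈ I, ∀ r : ℝ, pderivU q t r
      = deriv g t * r / w t r - g t * r * δ t * deriv δ t / (w t r)^3 := fun t ht r => by
    have h := ((hg1 t).hasDerivAt.mul_const r).div (hwu t ht r) (hwpos t ht r).ne'
    have h0 := (hwpos t ht r).ne'
    simp only [pderivU, hqdef]
    refine (h.deriv).trans ?_
    field_simp
  have hqvv : pderivV (pderivV q) u v = -3 * g u * (δ u)^2 * v / (w u v)^5 := by
    have h0 := (hwpos u hu v).ne'
    have h := (hasDerivAt_const v (g u * (δ u)^2)).div ((hwv u hu v).pow 3) (pow_ne_zero 3 h0)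
    have he : (fun r => pderivV q u r) = fun r => g u * (δ u)^2 / (w u r)^3 :=
      funext (hqv u hu)
    rw [pderivV, he]
    refine (h.deriv).trans ?_
    simp
    field_simp
  have hquv : pderivV (pderivU q) u v = deriv g u * (δ u)^2 / (w u v)^3
      - δ u * deriv δ u * g u * (1 / (w u v)^3 - 3 * v^2 / (w u v)^5) := by
    have h0 := (hwpos u hu v).ne'
    have hs := hw2 u hu v
    have h := (((hasDerivAt_id v).const_mul (deriv g u)).div (hwv u hu v) h0).sub
      (((((hasDerivAt_id v).const_mul (g u)).mul_const (δ u)).mul_const (deriv δ u)).div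
        ((hwv u hu v).pow 3) (pow_ne_zero 3 h0))
    have he : (fun r => pderivU q u r) = fun r => deriv g u * r / w u r
        - g u * r * δ u * deriv δ u / (w u r)^3 := funext (hqu u hu)
    rw [pderivV, he]
    refine (h.deriv).trans ?_
    simp
    field_simp
    linear_combination (deriv g u * w u v ^ 2) * hs
  have hyf : ∀ t ∈ I, ∀ r : ℝ,
      y t r = (-(deriv g t * r / δ t + g t * κ t)) • e t + (-(g t)) • z t := fun t ht r => by
    have h0 := (hwpos t ht r).ne'
    have h1 := hδ0 t ht
    have hs := hw2 t ht r
    have a1 : y1 t r = -(deriv g t * r / δ t + g t * κ t) := by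
      rw [hy1, hqu t ht, hqv t ht]; field_simp; ring
    have a2 : y2 t r = 0 := by
      rw [hy2, hqv t ht, hqdef]; field_simp; ring
    have a3 : y3 t r = -(g t) := by
      rw [hy3, hqv t ht, hqdef]; field_simp; linear_combination (g t) * hs
    rw [hy, a1, a2, a3]; simp
  have hd := hδ0 u hu
  have hE := (he0 u).hasDerivAt
  have hN := (he1 u).hasDerivAt
  have en := aux_unit hI hu heu hE
  have nn' := aux_unit hI hu he'u hN
  have ee := heu u hu
  have nn := he'u u hu
  have zE : z = fun t => cross3 (e t) (deriv e t) := funext fun t => by rw [hz, hn]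
  have hZ : HasDerivAt z (cross3 (deriv e u) (deriv e u) + cross3 (e u) (deriv (deriv e) u)) u := by
    rw [zE]; exact aux_cross_hasDeriv hE hN
  have hyv : pderivV y u v = (-(deriv g u / δ u)) • e u := by
    have h : HasDerivAt (fun r => (-(deriv g u * r / δ u + g u * κ u)) • e u + (-(g u)) • z u)
        ((-(deriv g u * 1 / δ u)) • e u) v :=
      ((((((hasDerivAt_id v).const_mul (deriv g u)).div_const (δ u)).add_const
        (g u * κ u)).neg).smul_const (e u)).add_const _
    rw [pderivV, show (fun r => y u r) = _ from funext (hyf u hu), h.deriv, mul_one]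
  obtain ⟨A', hyu⟩ : ∃ A' A : ℝ, pderivU y u v = A' • e u + A • deriv e u
      + (-(deriv g u)) • z u + (-(g u)) •
        (cross3 (deriv e u) (deriv e u) + cross3 (e u) (deriv (deriv e) u)) := by
    have hA : DifferentiableAt ℝ (fun t => -(deriv g t * v / δ t + g t * κ t)) u :=
      (((hg2 u).mul_const v).div (hδd u) hd |>.add ((hg1 u).mul (hκd u))).neg
    have h := (hA.hasDerivAt.smul hE).add ((hg1 u).hasDerivAt.neg.smul hZ)
    have h' := h.congr_of_eventuallyEq (f₁ := fun t => y t v)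
      (Filter.eventually_of_mem (hI.mem_nhds hu) (fun t ht => hyf t ht v))
    refine ⟨deriv (fun t => -(deriv g t * v / δ t + g t * κ t)) u,
      -(deriv g u * v / δ u + g u * κ u), (h'.deriv).trans ?_⟩
    simp only [Pi.neg_apply]
    abel
  obtain ⟨A, hyu⟩ := hyu
  have hxv : pderivV x u v = e u := by
    have h : HasDerivAt (fun r : ℝ => s u + r • e u) ((1:ℝ) • e u) v :=
      ((hasDerivAt_id v).smul_const (e u)).const_add _
    rw [pderivV, show (fun r => x u r) = _ from funext (hx u), h.deriv, one_smul]
  have hxu : pderivU x u v = (δ u * lam u) • e u + δ u • z u + v • deriv e u := by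
    have h : HasDerivAt (fun t => s t + v • e t) (deriv s u + v • deriv e u) u :=
      ((hs.differentiable (by simp)) u).hasDerivAt.add (hE.const_smul v)
    rw [pderivU, show (fun t => x t v) = _ from funext (fun t => hx t v), h.deriv, hstr u hu]
  obtain ⟨hB1, hB2⟩ := hB u hu v
  rw [hyu, hxu, hxv] at hB1
  rw [hyv, hxu, hxv] at hB2
  have zu : z u = cross3 (e u) (deriv e u) := by rw [zE]
  have zz : dot3 (z u) (z u) = 1 := by
    have : dot3 (z u) (z u) = dot3 (e u) (e u) * dot3 (deriv e u) (deriv e u)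
        - dot3 (e u) (deriv e u) ^ 2 := by
      rw [zu]; simp [dot3, cross3]; ring
    rw [this, ee, nn, en]; norm_num
  have ze : dot3 (z u) (e u) = 0 := by rw [zu]; simp [dot3, cross3]; ring
  have zn : dot3 (z u) (deriv e u) = 0 := by rw [zu]; simp [dot3, cross3]; ring
  have zz' : dot3 (z u) (cross3 (deriv e u) (deriv e u) + cross3 (e u) (deriv (deriv e) u)) = 0 := by
    have : dot3 (z u) (cross3 (deriv e u) (deriv e u) + cross3 (e u) (deriv (deriv e) u))
        = dot3 (e u) (e u) * dot3 (deriv e u) (deriv (deriv e) u)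
        - dot3 (e u) (deriv e u) * dot3 (e u) (deriv (deriv e) u) := by
      rw [zu]; simp [dot3, cross3]; ring
    rw [this, nn', en]; ring
  have dadd : ∀ a b c : E3, dot3 a (b + c) = dot3 a b + dot3 a c := by
    intro a b c; simp [dot3]; ring
  have dsm : ∀ (r : ℝ) (a b : E3), dot3 a (r • b) = r * dot3 a b := by
    intro r a b; simp [dot3]; ring
  have dneg : ∀ (a b : E3), dot3 a (-b) = - dot3 a b := by
    intro a b; simp [dot3]; ring
  have ez : dot3 (e u) (z u) = 0 := by rw [zu]; simp [dot3, cross3]; ring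
  have c1 := congrArg (dot3 (z u)) hB1
  have c2 := congrArg (dot3 (z u)) hB2
  have c3 := congrArg (dot3 (e u)) hB2
  rw [dadd, dadd, dadd, dsm, dsm, dsm, dsm, zz', zz, ze, zn, dneg, dadd, dsm, dsm, dadd, dadd,
    dsm, dsm, dsm, zz, ze, zn] at c1
  rw [dsm, dneg, dadd, dsm, dsm, dadd, dadd, dsm, dsm, dsm, zz, ze, zn] at c2
  rw [dsm, dneg, dadd, dsm, dsm, dadd, dadd, dsm, dsm, dsm, ee, ez, en] at c3
  have b00 : B 0 0 u v = deriv g u / δ u := by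
    field_simp; linarith
  have b10 : B 1 0 u v = 0 := by
    have : B 1 0 u v * δ u = 0 := by linarith
    exact (mul_eq_zero.1 this).resolve_right hd
  have b11 : B 1 1 u v = deriv g u / δ u := by
    rw [b10] at c3; linarith
  have hHf : H u v = deriv g u / δ u := by rw [hH, b00, b11]; ring
  have hKf : K u v = (deriv g u / δ u)^2 := by rw [hK, b00, b11, b10]; ring
  refine ⟨hHf, hKf, fun hv => ⟨?_, ?_⟩, by rw [hHf, hKf]; ring⟩
  · have h0 := (hwpos u hu v).ne'
    have hgu := hg0 u hu
    have hs2 := hw2 u hu v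
    have hw4 : w u v ^ 4 = ((δ u)^2 + v^2)^2 := by rw [← hs2]; ring
    have hw6 : w u v ^ 6 = ((δ u)^2 + v^2)^3 := by rw [← hs2]; ring
    rw [hS u v hv, hqvv, hquv, hqu u hu, hqv u hu, hqdef]
    field_simp
    ring_nf
    simp only [hw6, hw4, hs2]
    ring
  · have h0 := (hwpos u hu v).ne'
    have hgu := hg0 u hu
    have hs2 := hw2 u hu v
    have hw4 : w u v ^ 4 = ((δ u)^2 + v^2)^2 := by rw [← hs2]; ring
    have hw6 : w u v ^ 6 = ((δ u)^2 + v^2)^3 := by rw [← hs2]; ring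
    rw [hJ u v hv, hqu u hu, hqv u hu, hqdef]
    field_simp
    ring_nf
    simp only [hw6, hw4, hs2]
    ring
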